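/- Let l0, l1, l2, l3 ∈ ℤ_{≥0} and let e1 > e3 > e2 be real numbers with e1+e2+e3 = 0 (corresponding to a purely imaginary modulus τ ∈ iℝ_{>0}). Then all the roots of the spectral polynomial Q^{(l0,l1,l2,l3)}(E) are real and distinct provided that one of the following conditions holds: (i) l3 = 0 and l0 ≥ l1 + l2 − 1; (ii) l0 + l3 + 1 = l1 + l2, l2 + l3 ≥ l0 + l1 + 1 and l1 + l3 ≥ l0 + l2 + 1; (iii) l0 + l3 = l1 + l2 + 1, l0 + l1 ≥ l2 + l3 + 1 and l0 + l2 ≥ l1 + l3 + 1. -/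

import Mathlib

open Polynomial

/-- The polynomial `q(E) = −(E/4 − e1(ã2+ã3)² − e2(ã1+ã3)² − e3(ã1+ã2)² + e3·α·β)`,
where `α = ã0+ã1+ã2+ã3` and `β = −ã0+1/2+ã1+ã2+ã3`. -/
noncomputable def heunQE (e1 e2 e3 a0 a1 a2 a3 : ℝ) : Polynomial ℝ :=
  Polynomial.C (e1 * (a2 + a3) ^ 2 + e2 * (a1 + a3) ^ 2 + e3 * (a1 + a2) ^ 2
      - e3 * ((a0 + a1 + a2 + a3) * (-a0 + 1 / 2 + a1 + a2 + a3)))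
    - Polynomial.C (1 / 4 : ℝ) * Polynomial.X

/-- The coefficients `c_m` (polynomials in `E`) of the local Heun solution at `e3`, defined by
`c_0 = 1`, `(e1−e3)(e2−e3)γ3 c_1 = q(E)`, and for `m ≥ 1`
`(e1−e3)(e2−e3)(m+1)(m+γ3) c_{m+1} = −(m−1+α)(m−1+β) c_{m−1}
  + [m((m−1+γ3)(e1+e2−2e3) + (e2−e3)γ1 + (e1−e3)γ2) + q(E)] c_m`,
with `γ_i = 2ã_i + 1/2`, `α = ã0+ã1+ã2+ã3`, `β = −ã0+1/2+ã1+ã2+ã3`. -/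
noncomputable def heunC (e1 e2 e3 a0 a1 a2 a3 : ℝ) : ℕ → Polynomial ℝ
  | 0 => 1
  | 1 => Polynomial.C (((e1 - e3) * (e2 - e3) * (2 * a3 + 1 / 2))⁻¹)
      * heunQE e1 e2 e3 a0 a1 a2 a3
  | m + 2 =>
      Polynomial.C (((e1 - e3) * (e2 - e3) * ((m : ℝ) + 2) * ((m : ℝ) + 1 + (2 * a3 + 1 / 2)))⁻¹) *
        (Polynomial.C (-(((m : ℝ) + (a0 + a1 + a2 + a3))
              * ((m : ℝ) + (-a0 + 1 / 2 + a1 + a2 + a3))))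
            * heunC e1 e2 e3 a0 a1 a2 a3 m
          + (Polynomial.C (((m : ℝ) + 1) * (((m : ℝ) + (2 * a3 + 1 / 2)) * (e1 + e2 - 2 * e3)
                + (e2 - e3) * (2 * a1 + 1 / 2) + (e1 - e3) * (2 * a2 + 1 / 2)))
              + heunQE e1 e2 e3 a0 a1 a2 a3) * heunC e1 e2 e3 a0 a1 a2 a3 (m + 1))

/-- `P_{ã0,ã1,ã2,ã3}(E)`: the monic normalization of `c_{N+1}(E)`,
where `N = −(ã0+ã1+ã2+ã3)`. -/
noncomputable def specP (e1 e2 e3 a0 a1 a2 a3 : ℝ) (N : ℕ) : Polynomial ℝ :=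
  Polynomial.C ((heunC e1 e2 e3 a0 a1 a2 a3 (N + 1)).leadingCoeff)⁻¹ *
    heunC e1 e2 e3 a0 a1 a2 a3 (N + 1)

/-- The factor `P⁽⁰⁾(E)` of the spectral polynomial. -/
noncomputable def specP0 (e1 e2 e3 : ℝ) (l0 l1 l2 l3 : ℕ) : Polynomial ℝ :=
  if (l0 + l1 + l2 + l3) % 2 = 0 then
    specP e1 e2 e3 (-(l0 : ℝ) / 2) (-(l1 : ℝ) / 2) (-(l2 : ℝ) / 2) (-(l3 : ℝ) / 2)
      ((l0 + l1 + l2 + l3) / 2)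
  else if l1 + l2 + l3 + 3 ≤ l0 then
    specP e1 e2 e3 (-(l0 : ℝ) / 2) (((l1 : ℝ) + 1) / 2) (((l2 : ℝ) + 1) / 2) (((l3 : ℝ) + 1) / 2)
      ((l0 - l1 - l2 - l3 - 3) / 2)
  else if l0 = l1 + l2 + l3 + 1 then 1
  else
    specP e1 e2 e3 (((l0 : ℝ) + 1) / 2) (-(l1 : ℝ) / 2) (-(l2 : ℝ) / 2) (-(l3 : ℝ) / 2)
      ((l1 + l2 + l3 - l0 - 1) / 2)

/-- The factor `P⁽¹⁾(E)` of the spectral polynomial. -/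
noncomputable def specP1 (e1 e2 e3 : ℝ) (l0 l1 l2 l3 : ℕ) : Polynomial ℝ :=
  if (l0 + l1 + l2 + l3) % 2 = 0 then
    if l2 + l3 + 2 ≤ l0 + l1 then
      specP e1 e2 e3 (-(l0 : ℝ) / 2) (-(l1 : ℝ) / 2) (((l2 : ℝ) + 1) / 2) (((l3 : ℝ) + 1) / 2)
        ((l0 + l1 - l2 - l3) / 2 - 1)
    else if l0 + l1 = l2 + l3 then 1
    else
      specP e1 e2 e3 (((l0 : ℝ) + 1) / 2) (((l1 : ℝ) + 1) / 2) (-(l2 : ℝ) / 2) (-(l3 : ℝ) / 2)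
        ((l2 + l3 - l0 - l1) / 2 - 1)
  else
    if l0 + l2 + l3 + 3 ≤ l1 then
      specP e1 e2 e3 (((l0 : ℝ) + 1) / 2) (-(l1 : ℝ) / 2) (((l2 : ℝ) + 1) / 2) (((l3 : ℝ) + 1) / 2)
        ((l1 - l0 - l2 - l3 - 3) / 2)
    else if l1 = l0 + l2 + l3 + 1 then 1
    else
      specP e1 e2 e3 (-(l0 : ℝ) / 2) (((l1 : ℝ) + 1) / 2) (-(l2 : ℝ) / 2) (-(l3 : ℝ) / 2)
        ((l0 + l2 + l3 - l1 - 1) / 2)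

/-- The factor `P⁽²⁾(E)` of the spectral polynomial. -/
noncomputable def specP2 (e1 e2 e3 : ℝ) (l0 l1 l2 l3 : ℕ) : Polynomial ℝ :=
  if (l0 + l1 + l2 + l3) % 2 = 0 then
    if l1 + l3 + 2 ≤ l0 + l2 then
      specP e1 e2 e3 (-(l0 : ℝ) / 2) (((l1 : ℝ) + 1) / 2) (-(l2 : ℝ) / 2) (((l3 : ℝ) + 1) / 2)
        ((l0 + l2 - l1 - l3) / 2 - 1)
    else if l0 + l2 = l1 + l3 then 1
    else
      specP e1 e2 e3 (((l0 : ℝ) + 1) / 2) (-(l1 : ℝ) / 2) (((l2 : ℝ) + 1) / 2) (-(l3 : ℝ) / 2)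
        ((l1 + l3 - l0 - l2) / 2 - 1)
  else
    if l0 + l1 + l3 + 3 ≤ l2 then
      specP e1 e2 e3 (((l0 : ℝ) + 1) / 2) (((l1 : ℝ) + 1) / 2) (-(l2 : ℝ) / 2) (((l3 : ℝ) + 1) / 2)
        ((l2 - l0 - l1 - l3 - 3) / 2)
    else if l2 = l0 + l1 + l3 + 1 then 1
    else
      specP e1 e2 e3 (-(l0 : ℝ) / 2) (-(l1 : ℝ) / 2) (((l2 : ℝ) + 1) / 2) (-(l3 : ℝ) / 2)
        ((l0 + l1 + l3 - l2 - 1) / 2)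

/-- The factor `P⁽³⁾(E)` of the spectral polynomial. -/
noncomputable def specP3 (e1 e2 e3 : ℝ) (l0 l1 l2 l3 : ℕ) : Polynomial ℝ :=
  if (l0 + l1 + l2 + l3) % 2 = 0 then
    if l1 + l2 + 2 ≤ l0 + l3 then
      specP e1 e2 e3 (-(l0 : ℝ) / 2) (((l1 : ℝ) + 1) / 2) (((l2 : ℝ) + 1) / 2) (-(l3 : ℝ) / 2)
        ((l0 + l3 - l1 - l2) / 2 - 1)
    else if l0 + l3 = l1 + l2 then 1
    else
      specP e1 e2 e3 (((l0 : ℝ) + 1) / 2) (-(l1 : ℝ) / 2) (-(l2 : ℝ) / 2) (((l3 : ℝ) + 1) / 2)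
        ((l1 + l2 - l0 - l3) / 2 - 1)
  else
    if l0 + l1 + l2 + 3 ≤ l3 then
      specP e1 e2 e3 (((l0 : ℝ) + 1) / 2) (((l1 : ℝ) + 1) / 2) (((l2 : ℝ) + 1) / 2) (-(l3 : ℝ) / 2)
        ((l3 - l0 - l1 - l2 - 3) / 2)
    else if l3 = l0 + l1 + l2 + 1 then 1
    else
      specP e1 e2 e3 (-(l0 : ℝ) / 2) (-(l1 : ℝ) / 2) (-(l2 : ℝ) / 2) (((l3 : ℝ) + 1) / 2)
        ((l0 + l1 + l2 - l3 - 1) / 2)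

/-- The spectral polynomial `Q^{(l0,l1,l2,l3)}(E) = P⁽⁰⁾P⁽¹⁾P⁽²⁾P⁽³⁾` of the
Treibich-Verdier operator `H^{(l0,l1,l2,l3)}`. -/
noncomputable def specQ (e1 e2 e3 : ℝ) (l0 l1 l2 l3 : ℕ) : Polynomial ℝ :=
  specP0 e1 e2 e3 l0 l1 l2 l3 * specP1 e1 e2 e3 l0 l1 l2 l3 *
    specP2 e1 e2 e3 l0 l1 l2 l3 * specP3 e1 e2 e3 l0 l1 l2 l3

/-!
Each factor `P` is, up to a constant, the last term `c_{N+1}` of a three-term recurrence, hence the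
characteristic polynomial of a Jacobi matrix. If the products of opposite off-diagonal entries are
positive, the Christoffel-Darboux identity, evaluated at a pair of conjugate numbers and at a
number and its infinitesimal translate, shows that the roots are real and simple. The exponents of
Heun's equation at `e1` can be reflected without changing the roots, and under the conditions on
`l0, l1, l2, l3` the products are positive either before or after this reflection.

The roots of `c_{N+1}` are the values of `E` for which Heun's equation has a polynomial solution of
degree at most `N`. A common root of two different factors would give solutions
`f(℘) ∏ (℘ - eᵢ) ^ (kᵢ / 2)` and `g(℘) ∏ (℘ - eᵢ) ^ (nᵢ / 2)` of the same Schrödinger equation, with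
`i = 1, 2, 3`. Their Wronskian is constant, and comparing exponents at the `eᵢ` shows that the three
numbers `kᵢ - nᵢ` have the same parity, which never happens for two different factors.
-/

section SimpleRoots

variable {K : Type*} [Field K] {p q : K[X]}

/-- All roots of `p` in an algebraic closure are simple and lie in `K`. -/
structure SplitsSeparably (p : K[X]) : Prop where
  splits : p.Splits
  separable : p.Separable

theorem isCoprime_of_splits_of_forall_isRoot (hp : p.Splits) (hp0 : p ≠ 0)
    (h : ∀ x, p.IsRoot x → ¬ q.IsRoot x) : IsCoprime p q := by
  refine isCoprime_of_irreducible_dvd (fun h0 => hp0 h0.1) fun r hr hrp hrq => ?_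
  have hr1 : r.degree = 1 := (hp.of_dvd hp0 hrp).degree_eq_one_of_irreducible hr
  obtain ⟨x, hx⟩ := exists_root_of_degree_eq_one hr1
  exact h x (hx.dvd hrp) (hx.dvd hrq)

namespace SplitsSeparably

theorem one : SplitsSeparably (1 : K[X]) := ⟨.one, separable_one⟩

theorem mul (hp : SplitsSeparably p) (hq : SplitsSeparably q) (h : IsCoprime p q) :
    SplitsSeparably (p * q) :=
  ⟨hp.splits.mul hq.splits, hp.separable.mul hq.separable h⟩

theorem C_mul (hp : SplitsSeparably p) {c : K} (hc : c ≠ 0) : SplitsSeparably (C c * p) :=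
  ⟨hp.splits.C_mul c, hp.separable.unit_mul (isUnit_C.2 hc.isUnit)⟩

theorem isCoprime (hp : SplitsSeparably p) (h : ∀ x, p.IsRoot x → ¬ q.IsRoot x) : IsCoprime p q :=
  isCoprime_of_splits_of_forall_isRoot hp.splits hp.separable.ne_zero h

theorem of_isRoot_imp (hp : SplitsSeparably p) (hq : q ≠ 0) (hdeg : q.natDegree = p.natDegree)
    (h : ∀ x, p.IsRoot x → q.IsRoot x) : SplitsSeparably q := by
  have hp0 : p ≠ 0 := hp.separable.ne_zero
  have hroots : p.roots ≤ q.roots :=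
    (Multiset.le_iff_subset (nodup_roots hp.separable)).2 fun x hx =>
      (mem_roots hq).2 (h x ((mem_roots hp0).1 hx))
  obtain ⟨r, rfl⟩ := hp.splits.dvd_of_roots_le_roots hp0 hroots
  have hr : r ≠ 0 := right_ne_zero_of_mul hq
  rw [natDegree_mul hp0 hr, Nat.add_eq_left] at hdeg
  obtain ⟨c, rfl⟩ : ∃ c, C c = r := ⟨_, (eq_C_of_natDegree_eq_zero hdeg).symm⟩
  rw [mul_comm]
  exact hp.C_mul (C_ne_zero.1 hr)

theorem map_algebraMap_complex {p : ℝ[X]} (hp : SplitsSeparably p) :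
    p.map (algebraMap ℝ ℂ) ≠ 0 ∧ (p.map (algebraMap ℝ ℂ)).roots.Nodup ∧
      ∀ z ∈ (p.map (algebraMap ℝ ℂ)).roots, z.im = 0 := by
  have hsep : (p.map (algebraMap ℝ ℂ)).Separable := hp.separable.map
  refine ⟨hsep.ne_zero, nodup_roots hsep, fun z hz => ?_⟩
  rw [hp.splits.roots_map] at hz
  obtain ⟨x, -, rfl⟩ := Multiset.mem_map.1 hz
  exact Complex.ofReal_im x

end SplitsSeparably

end SimpleRoots

section ThreeTerm

variable {R S : Type*} [CommRing R] [CommRing S] [Algebra R S]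

/-- The sequence `u` is a formal eigenvector, with eigenvalue `x`, of the infinite Jacobi matrix
with diagonal `b`, superdiagonal `-a` and subdiagonal `-d`. -/
structure IsThreeTerm (a b d : ℕ → R) (x : S) (u : ℕ → S) : Prop where
  one : a 0 • u 1 = b 0 • u 0 - x * u 0
  step : ∀ m, a (m + 1) • u (m + 2) = b (m + 1) • u (m + 1) - x * u (m + 1) - d m • u m

namespace IsThreeTerm

variable {a b d : ℕ → R} {x y : S} {u v : ℕ → S}

theorem map {T : Type*} [CommRing T] [Algebra R T] (f : S →ₐ[R] T) (hu : IsThreeTerm a b d x u) :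
    IsThreeTerm a b d (f x) (fun m => f (u m)) where
  one := by simpa only [map_smul, map_sub, map_mul] using congrArg f hu.one
  step m := by simpa only [map_smul, map_sub, map_mul] using congrArg f (hu.step m)

theorem christoffel_darboux {h : ℕ → R} {N : ℕ} (hh : ∀ m < N, h (m + 1) * d m = h m * a m)
    (hu : IsThreeTerm a b d x u) (hv : IsThreeTerm a b d y v) :
    (h N * a N) • (u (N + 1) * v N - u N * v (N + 1)) =
      (y - x) * ∑ j ∈ Finset.range (N + 1), h j • (u j * v j) := by
  induction N with
  | zero =>
    have hu1 := hu.one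
    have hv1 := hv.one
    simp only [Algebra.smul_def, map_mul, zero_add, Finset.range_one, Finset.sum_singleton]
      at hu1 hv1 ⊢
    linear_combination algebraMap R S (h 0) * (v 0 * hu1 - u 0 * hv1)
  | succ N ih =>
    have hu1 := hu.step N
    have hv1 := hv.step N
    have hN := congrArg (algebraMap R S) (hh N N.lt_succ_self)
    rw [Finset.sum_range_succ, mul_add, ← ih fun m hm => hh m (hm.trans N.lt_succ_self)]
    simp only [Algebra.smul_def, map_mul] at hu1 hv1 hN ⊢
    linear_combination algebraMap R S (h (N + 1)) * (v (N + 1) * hu1 - u (N + 1) * hv1)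
      + (u (N + 1) * v N - u N * v (N + 1)) * hN

theorem rescale {a b d a' d' ρ : ℕ → R} {x : R} {u : ℕ → R} (hu : IsThreeTerm a b d x u)
    (ha : ∀ m, a' m * ρ (m + 1) = ρ m * a m) (hd : ∀ m, d' m * ρ m = ρ (m + 1) * d m) :
    IsThreeTerm a' b d' x fun m => ρ m * u m where
  one := by
    have h1 := hu.one
    simp only [smul_eq_mul] at h1 ⊢
    linear_combination u 1 * ha 0 + ρ 0 * h1
  step m := by
    have h1 := hu.step m
    simp only [smul_eq_mul] at h1 ⊢
    linear_combination u (m + 2) * ha (m + 1) + ρ (m + 1) * h1 + u m * hd m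

end IsThreeTerm

section Domain

variable [IsDomain R] {a b d : ℕ → R} {x : R} {u v : ℕ → R}

theorem IsThreeTerm.eq_zero_of_lt (ha : ∀ m, a m ≠ 0) (hu : IsThreeTerm a b d x u) {N : ℕ}
    (hd : d N = 0) (hN : u (N + 1) = 0) {m : ℕ} (hm : N < m) : u m = 0 := by
  have hstep : ∀ m, u (m + 1) = 0 → d m * u m = 0 → u (m + 2) = 0 := fun m h1 h2 =>
    (mul_eq_zero.1 (by simpa [h1, h2] using hu.step m)).resolve_left (ha (m + 1))
  have hsucc : ∀ k, u (N + k + 1) = 0 ∧ u (N + k + 2) = 0 := fun k => by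
    induction k with
    | zero => exact ⟨hN, hstep N hN (by rw [hd, zero_mul])⟩
    | succ k ih => exact ⟨ih.2, hstep (N + k + 1) ih.2 (by rw [ih.1, mul_zero])⟩
  obtain ⟨k, rfl⟩ := Nat.exists_eq_add_of_lt hm
  exact (hsucc k).1

theorem IsThreeTerm.eq_mul (ha : ∀ m, a m ≠ 0)
    (hu : IsThreeTerm a b d x u) (hv : IsThreeTerm a b d x v) (h0 : u 0 = 1) (m : ℕ) :
    v m = v 0 * u m := by
  induction m using Nat.twoStepInduction with
  | zero => rw [h0, mul_one]
  | one =>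
    refine mul_left_cancel₀ (ha 0) ?_
    have hu1 := hu.one
    have hv1 := hv.one
    simp only [smul_eq_mul] at hu1 hv1
    rw [h0] at hu1
    linear_combination hv1 - v 0 * hu1
  | more m hm hm1 =>
    refine mul_left_cancel₀ (ha (m + 1)) ?_
    have hu2 := hu.step m
    have hv2 := hv.step m
    simp only [smul_eq_mul, hm, hm1] at hu2 hv2
    linear_combination hv2 - v 0 * hu2

end Domain

end ThreeTerm

section Jacobi

theorem IsThreeTerm.natDegree_eq {K : Type*} [Field K] {a b d : ℕ → K} {κ : K} {c : ℕ → K[X]}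
    (hκ : κ ≠ 0) (ha : ∀ m, a m ≠ 0) (hc : IsThreeTerm a b d (C κ * X) c) (h0 : c 0 = 1) (m : ℕ) :
    (c m).natDegree = m := by
  have hsmul : ∀ {r : K}, r ≠ 0 → ∀ p : K[X], (r • p).degree = p.degree := fun hr p => by
    rw [smul_eq_C_mul, degree_C_mul hr]
  have hsub : ∀ {p q : K[X]}, p ≠ 0 → q.degree ≤ p.degree →
      (q - C κ * X * p).degree = p.degree + 1 := fun {p q} hp hqp => by
    have hX : (C κ * X * p).degree = p.degree + 1 := by
      rw [degree_mul, degree_C_mul_X hκ, add_comm]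
    have hlt : q.degree < (C κ * X * p).degree := by
      rw [hX, ← degree_mul_X]
      exact hqp.trans_lt (degree_lt_degree_mul_X hp)
    rw [degree_sub_eq_right_of_degree_lt hlt, hX]
  suffices h : ∀ m, (c m).degree = m from natDegree_eq_of_degree_eq_some (h m)
  intro m
  induction m using Nat.twoStepInduction with
  | zero => simp [h0]
  | one =>
    rw [← hsmul (ha 0), hc.one, hsub (by simp [h0]) (degree_smul_le _ _), h0]
    simp
  | more m hm hm1 =>
    rw [← hsmul (ha (m + 1)), hc.step, sub_right_comm, hsub, hm1]
    · rfl
    · exact fun h => WithBot.bot_ne_coe ((degree_zero (R := K)).symm.trans (h ▸ hm1))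
    · refine (degree_sub_le _ _).trans (max_le (degree_smul_le _ _) ?_)
      refine (degree_smul_le _ _).trans ?_
      rw [hm, hm1]
      exact_mod_cast m.le_succ

theorem exists_symmetrizing_weights {a d : ℕ → ℝ} {N : ℕ} (had : ∀ m < N, 0 < a m * d m) :
    ∃ h : ℕ → ℝ, (∀ m ≤ N, 0 < h m) ∧ ∀ m < N, h (m + 1) * d m = h m * a m := by
  refine ⟨fun m => ∏ j ∈ Finset.range m, a j / d j, fun m hm => ?_, fun m hm => ?_⟩
  · refine Finset.prod_pos fun j hj => ?_
    exact div_pos_iff.2 <| mul_pos_iff.1 <| had j ((Finset.mem_range.1 hj).trans_le hm)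
  · have hd : d m ≠ 0 := right_ne_zero_of_mul (had m hm).ne'
    simp only [Finset.prod_range_succ]
    rw [mul_assoc, div_mul_cancel₀ _ hd]

variable {a b d : ℕ → ℝ} {κ : ℝ} {c : ℕ → ℝ[X]} {N : ℕ} {h : ℕ → ℝ}

theorem IsThreeTerm.sub_mul_sum_eq_zero {S : Type*} [CommRing S] [Algebra ℝ S] (hκ : κ ≠ 0)
    (hc : IsThreeTerm a b d (C κ * X) c) (hh : ∀ m < N, h (m + 1) * d m = h m * a m) {x y : S}
    (hx : aeval x (c (N + 1)) = 0) (hy : aeval y (c (N + 1)) = 0) :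
    (y - x) * ∑ j ∈ Finset.range (N + 1), h j • (aeval x (c j) * aeval y (c j)) = 0 := by
  have hCD := (hc.map (aeval x)).christoffel_darboux hh (hc.map (aeval y))
  simp only [hx, hy, zero_mul, mul_zero, sub_zero, smul_zero, map_mul, aeval_C, aeval_X,
    ← mul_sub, mul_assoc] at hCD
  exact (((isUnit_iff_ne_zero.2 hκ).map (algebraMap ℝ S)).mul_right_eq_zero).1 hCD.symm

theorem IsThreeTerm.im_eq_zero (hκ : κ ≠ 0) (hc : IsThreeTerm a b d (C κ * X) c) (h0 : c 0 = 1)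
    (had : ∀ m < N, 0 < a m * d m) {z : ℂ} (hz : aeval z (c (N + 1)) = 0) : z.im = 0 := by
  obtain ⟨h, hpos, hh⟩ := exists_symmetrizing_weights had
  have hzero := hc.sub_mul_sum_eq_zero hκ hh hz (y := starRingEnd ℂ z)
    (by rw [aeval_conj, hz, map_zero])
  have hsum : ∑ j ∈ Finset.range (N + 1), h j * Complex.normSq (aeval z (c j)) ≠ 0 := by
    refine (Finset.sum_pos' (fun j hj => ?_) ⟨0, by simp, by simp [h0, hpos]⟩).ne'
    exact mul_nonneg (hpos j (Finset.mem_range_succ_iff.1 hj)).le (Complex.normSq_nonneg _)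
  simp only [aeval_conj, Complex.mul_conj, Complex.real_smul, ← Complex.ofReal_mul,
    ← Complex.ofReal_sum] at hzero
  exact Complex.conj_eq_iff_im.1
    (sub_eq_zero.1 ((mul_eq_zero.1 hzero).resolve_right (Complex.ofReal_ne_zero.2 hsum)))

open DualNumber in
theorem IsThreeTerm.derivative_eval_ne_zero (hκ : κ ≠ 0) (hc : IsThreeTerm a b d (C κ * X) c)
    (h0 : c 0 = 1) (had : ∀ m < N, 0 < a m * d m) {r : ℝ} (hr : (c (N + 1)).eval r = 0) :
    (derivative (c (N + 1))).eval r ≠ 0 := by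
  intro hr'
  obtain ⟨h, hpos, hh⟩ := exists_symmetrizing_weights had
  have haeval : ∀ p : ℝ[X], aeval (algebraMap ℝ ℝ[ε] r + ε) p =
      algebraMap ℝ ℝ[ε] (p.eval r) + algebraMap ℝ ℝ[ε] ((derivative p).eval r) * ε := fun p => by
    rw [aeval_add_of_sq_eq_zero p _ _ eps_pow_two, aeval_algebraMap_apply_eq_algebraMap_eval,
      aeval_algebraMap_apply_eq_algebraMap_eval]
  have hzero := hc.sub_mul_sum_eq_zero hκ hh (x := algebraMap ℝ ℝ[ε] r)
    (y := algebraMap ℝ ℝ[ε] r + ε) (by rw [aeval_algebraMap_apply_eq_algebraMap_eval, hr, map_zero])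
    (by rw [haeval, hr, hr', map_zero, zero_mul, add_zero])
  have hsum : 0 < ∑ j ∈ Finset.range (N + 1), h j * (c j).eval r ^ 2 := by
    refine Finset.sum_pos' (fun j hj => ?_) ⟨0, by simp, by simp [h0, hpos]⟩
    exact mul_nonneg (hpos j (Finset.mem_range_succ_iff.1 hj)).le (sq_nonneg _)
  refine hsum.ne' ?_
  simp only [haeval, aeval_algebraMap_apply_eq_algebraMap_eval, add_sub_cancel_left] at hzero
  simpa [TrivSqZeroExt.algebraMap_eq_inl, TrivSqZeroExt.fst_sum, pow_two] using
    congrArg TrivSqZeroExt.snd hzero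

theorem IsThreeTerm.splitsSeparably (hκ : κ ≠ 0) (hc : IsThreeTerm a b d (C κ * X) c)
    (h0 : c 0 = 1) (had : ∀ m < N, 0 < a m * d m) : SplitsSeparably (c (N + 1)) := by
  have hreal : ∀ {z : ℂ}, aeval z (c (N + 1)) = 0 → z.im = 0 := hc.im_eq_zero hκ h0 had
  have hne : c (N + 1) ≠ 0 := fun h => by
    simpa using hreal (z := Complex.I) (by rw [h, map_zero])
  have hsplits : (c (N + 1)).Splits := by
    refine .of_splits_map (algebraMap ℝ ℂ) (IsAlgClosed.splits _) fun z hz => ?_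
    have hz0 : aeval z (c (N + 1)) = 0 := by
      rw [← eval_map_algebraMap]
      exact (mem_roots'.1 hz).2
    exact ⟨z.re, Complex.ext rfl (hreal hz0).symm⟩
  exact ⟨hsplits, isCoprime_of_splits_of_forall_isRoot hsplits hne
    fun r hr => hc.derivative_eval_ne_zero hκ h0 had hr⟩

end Jacobi

section HeunEquation

variable (e1 e2 e3 a0 a1 a2 a3 : ℝ)

/-- The coefficient `(e1 - e3)(e2 - e3)(m + 1)(m + γ3)` of `c_{m+1}` in the recurrence for
`heunC`. -/
noncomputable def heunA (m : ℕ) : ℝ :=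
  (e1 - e3) * (e2 - e3) * ((m : ℝ) + 1) * ((m : ℝ) + (2 * a3 + 1 / 2))

/-- The coefficient of `c_m` in the recurrence for `heunC`, without its term `-E / 4`. -/
noncomputable def heunB (m : ℕ) : ℝ :=
  (m : ℝ) * (((m : ℝ) - 1 + (2 * a3 + 1 / 2)) * (e1 + e2 - 2 * e3)
      + (e2 - e3) * (2 * a1 + 1 / 2) + (e1 - e3) * (2 * a2 + 1 / 2))
    + (e1 * (a2 + a3) ^ 2 + e2 * (a1 + a3) ^ 2 + e3 * (a1 + a2) ^ 2
      - e3 * ((a0 + a1 + a2 + a3) * (-a0 + 1 / 2 + a1 + a2 + a3)))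

/-- The coefficient `(m + α)(m + β)` of `-c_m` in the recurrence for `heunC`, where it occurs in
the equation for `c_{m+2}`. -/
noncomputable def heunD (m : ℕ) : ℝ :=
  ((m : ℝ) + (a0 + a1 + a2 + a3)) * ((m : ℝ) + (-a0 + 1 / 2 + a1 + a2 + a3))

variable {e1 e2 e3 a3}

theorem heunA_ne_zero (h13 : e1 ≠ e3) (h23 : e2 ≠ e3)
    (hγ : ∀ m : ℕ, (m : ℝ) + (2 * a3 + 1 / 2) ≠ 0) (m : ℕ) : heunA e1 e2 e3 a3 m ≠ 0 :=
  mul_ne_zero (mul_ne_zero (mul_ne_zero (sub_ne_zero.2 h13) (sub_ne_zero.2 h23))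
    m.cast_add_one_ne_zero) (hγ m)

theorem isThreeTerm_heunC (h13 : e1 ≠ e3) (h23 : e2 ≠ e3)
    (hγ : ∀ m : ℕ, (m : ℝ) + (2 * a3 + 1 / 2) ≠ 0) :
    IsThreeTerm (heunA e1 e2 e3 a3) (heunB e1 e2 e3 a0 a1 a2 a3) (heunD a0 a1 a2 a3)
      (C (1 / 4) * X) (heunC e1 e2 e3 a0 a1 a2 a3) where
  one := by
    have hA : (e1 - e3) * (e2 - e3) * (2 * a3 + 1 / 2) = heunA e1 e2 e3 a3 0 := by simp [heunA]
    have hA0 := heunA_ne_zero h13 h23 hγ 0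
    rw [heunC.eq_2, heunC.eq_1, hA, smul_eq_C_mul, ← mul_assoc, ← C_mul, mul_inv_cancel₀ hA0,
      heunQE]
    simp [heunB, smul_eq_C_mul]
  step m := by
    have hA : (e1 - e3) * (e2 - e3) * ((m : ℝ) + 2) * ((m : ℝ) + 1 + (2 * a3 + 1 / 2))
        = heunA e1 e2 e3 a3 (m + 1) := by
      rw [heunA]; push_cast; ring
    have hA0 := heunA_ne_zero h13 h23 hγ (m + 1)
    rw [heunC, hA, smul_eq_C_mul, ← mul_assoc, ← C_mul, mul_inv_cancel₀ hA0, heunQE, heunB, heunD]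
    push_cast
    simp only [smul_eq_C_mul, add_sub_cancel_right, C_add, C_neg, C_1]
    ring

theorem isThreeTerm_eval_heunC (h13 : e1 ≠ e3) (h23 : e2 ≠ e3)
    (hγ : ∀ m : ℕ, (m : ℝ) + (2 * a3 + 1 / 2) ≠ 0) (E : ℝ) :
    IsThreeTerm (heunA e1 e2 e3 a3) (heunB e1 e2 e3 a0 a1 a2 a3) (heunD a0 a1 a2 a3)
      (E / 4) fun m => (heunC e1 e2 e3 a0 a1 a2 a3 m).eval E := by
  have h := (isThreeTerm_heunC a0 a1 a2 h13 h23 hγ).map (aeval E)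
  simp only [map_mul, aeval_C, aeval_X, Algebra.algebraMap_self, RingHom.id_apply,
    coe_aeval_eq_eval, one_div_mul_eq_div] at h
  exact h

theorem natDegree_heunC (h13 : e1 ≠ e3) (h23 : e2 ≠ e3)
    (hγ : ∀ m : ℕ, (m : ℝ) + (2 * a3 + 1 / 2) ≠ 0) (m : ℕ) :
    (heunC e1 e2 e3 a0 a1 a2 a3 m).natDegree = m :=
  (isThreeTerm_heunC a0 a1 a2 h13 h23 hγ).natDegree_eq (by norm_num) (heunA_ne_zero h13 h23 hγ)
    (by simp [heunC]) m

variable (e1 e2 e3 a3)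

/-- The sum `∑ cᵢ F / (X - eᵢ)`, where `F = ∏ (X - eᵢ)`. -/
noncomputable def cofactorSum {R : Type*} [CommRing R] (e1 e2 e3 c1 c2 c3 : R) : R[X] :=
  C c1 * (X - C e2) * (X - C e3) + C c2 * (X - C e1) * (X - C e3) + C c3 * (X - C e1) * (X - C e2)

/-- The coefficient of order zero of `heunOperator`. -/
noncomputable def heunPotential (E : ℝ) : ℝ[X] :=
  C ((a0 + a1 + a2 + a3) * (-a0 + 1 / 2 + a1 + a2 + a3)) * X
    + C (E / 4 - (e1 * (a2 + a3) ^ 2 + e2 * (a1 + a3) ^ 2 + e3 * (a1 + a2) ^ 2))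

/-- The Heun operator with singular points `e1`, `e2`, `e3`, where it has exponents
`0` and `1 / 2 - 2 * aᵢ`, and with accessory parameter `E`. -/
noncomputable def heunOperator (E : ℝ) (p : ℝ[X]) : ℝ[X] :=
  (X - C e1) * (X - C e2) * (X - C e3) * derivative (derivative p)
    + cofactorSum e1 e2 e3 (2 * a1 + 1 / 2) (2 * a2 + 1 / 2) (2 * a3 + 1 / 2) * derivative p
    + heunPotential e1 e2 e3 a0 a1 a2 a3 E * p

variable (E : ℝ) (p : ℝ[X])

theorem heunOperator_swap13 :
    heunOperator e3 e2 e1 a0 a3 a2 a1 E p = heunOperator e1 e2 e3 a0 a1 a2 a3 E p := by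
  simp only [heunOperator, heunPotential, cofactorSum, C_add, C_sub, C_mul, C_neg, C_pow]
  ring

/-- The terms are sorted by the amount by which they shift the index of a coefficient. -/
theorem taylor_heunOperator :
    taylor e3 (heunOperator e1 e2 e3 a0 a1 a2 a3 E p) =
      X * (X * (X * derivative (derivative (taylor e3 p)))
          + C (3 / 2 + 2 * (a1 + a2 + a3)) * (X * derivative (taylor e3 p))
          + C ((a0 + a1 + a2 + a3) * (-a0 + 1 / 2 + a1 + a2 + a3)) * taylor e3 p)
      - C (e1 + e2 - 2 * e3) * (X * (X * derivative (derivative (taylor e3 p))))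
      - C ((2 * a3 + 1 / 2) * (e1 + e2 - 2 * e3)
          + (e2 - e3) * (2 * a1 + 1 / 2) + (e1 - e3) * (2 * a2 + 1 / 2))
        * (X * derivative (taylor e3 p))
      - C (heunB e1 e2 e3 a0 a1 a2 a3 0 - E / 4) * taylor e3 p
      + C ((e1 - e3) * (e2 - e3)) * (X * derivative (derivative (taylor e3 p)))
      + C ((e1 - e3) * (e2 - e3) * (2 * a3 + 1 / 2)) * derivative (taylor e3 p) := by
  have hderiv : ∀ q : ℝ[X], taylor e3 (derivative q) = derivative (taylor e3 q) := fun q => by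
    simp [taylor_apply, derivative_comp]
  have h32 : (C (3 / 2 : ℝ) : ℝ[X]) = 3 * C (1 / 2) := by
    rw [← map_ofNat C 3, ← C_mul]; norm_num
  simp only [heunOperator, heunPotential, cofactorSum, taylor_mul, map_add (taylor e3),
    map_sub (taylor e3), taylor_X, taylor_C, hderiv]
  simp only [heunB, Nat.cast_zero, C_add, C_sub, C_mul, C_neg, C_pow, C_0, map_ofNat C, h32]
  ring

theorem coeff_X_mul_derivative {R : Type*} [CommRing R] (q : R[X]) (m : ℕ) :
    (X * derivative q).coeff m = m * q.coeff m := by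
  cases m with
  | zero => simp
  | succ m => rw [coeff_X_mul, coeff_derivative]; push_cast; ring

theorem coeff_X_mul_X_mul_derivative_derivative {R : Type*} [CommRing R] (q : R[X]) (m : ℕ) :
    (X * (X * derivative (derivative q))).coeff m = m * (m - 1) * q.coeff m := by
  cases m with
  | zero => simp
  | succ m => rw [coeff_X_mul, coeff_X_mul_derivative, coeff_derivative]; push_cast; ring

theorem coeff_taylor_heunOperator_zero :
    (taylor e3 (heunOperator e1 e2 e3 a0 a1 a2 a3 E p)).coeff 0 =
      heunA e1 e2 e3 a3 0 * (taylor e3 p).coeff 1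
        - (heunB e1 e2 e3 a0 a1 a2 a3 0 - E / 4) * (taylor e3 p).coeff 0 := by
  rw [taylor_heunOperator]
  simp only [coeff_add, coeff_sub, coeff_C_mul, coeff_X_mul_zero, coeff_derivative, heunA]
  push_cast
  ring

theorem coeff_taylor_heunOperator_succ (m : ℕ) :
    (taylor e3 (heunOperator e1 e2 e3 a0 a1 a2 a3 E p)).coeff (m + 1) =
      heunA e1 e2 e3 a3 (m + 1) * (taylor e3 p).coeff (m + 2)
        - (heunB e1 e2 e3 a0 a1 a2 a3 (m + 1) - E / 4) * (taylor e3 p).coeff (m + 1)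
        + heunD a0 a1 a2 a3 m * (taylor e3 p).coeff m := by
  rw [taylor_heunOperator]
  simp only [coeff_add, coeff_sub, coeff_C_mul, coeff_X_mul _ m, coeff_X_mul_derivative,
    coeff_X_mul_X_mul_derivative_derivative, coeff_derivative, heunA, heunB, heunD]
  push_cast
  ring

variable {e1 e2 e3 a0 a1 a2 a3 E p}

theorem heunOperator_eq_zero_iff :
    heunOperator e1 e2 e3 a0 a1 a2 a3 E p = 0 ↔
      IsThreeTerm (heunA e1 e2 e3 a3) (heunB e1 e2 e3 a0 a1 a2 a3) (heunD a0 a1 a2 a3)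
        (E / 4) (taylor e3 p).coeff := by
  rw [← (taylor_injective e3).eq_iff, map_zero, Polynomial.ext_iff]
  refine ⟨fun h => ⟨?_, fun m => ?_⟩, fun h m => ?_⟩
  · have h0 := h 0
    rw [coeff_taylor_heunOperator_zero, coeff_zero] at h0
    simp only [smul_eq_mul]
    linear_combination h0
  · have hm := h (m + 1)
    rw [coeff_taylor_heunOperator_succ, coeff_zero] at hm
    simp only [smul_eq_mul]
    linear_combination hm
  · rw [coeff_zero]
    cases m with
    | zero =>
      have h1 := h.one
      rw [coeff_taylor_heunOperator_zero]
      simp only [smul_eq_mul] at h1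
      linear_combination h1
    | succ m =>
      have hm := h.step m
      rw [coeff_taylor_heunOperator_succ]
      simp only [smul_eq_mul] at hm
      linear_combination hm

theorem heunD_eq_zero {N : ℕ} (hN : a0 + a1 + a2 + a3 = -N) : heunD a0 a1 a2 a3 N = 0 := by
  rw [heunD, hN, add_neg_cancel, zero_mul]

theorem isRoot_heunC_iff (h13 : e1 ≠ e3) (h23 : e2 ≠ e3)
    (hγ : ∀ m : ℕ, (m : ℝ) + (2 * a3 + 1 / 2) ≠ 0) {N : ℕ} (hN : a0 + a1 + a2 + a3 = -N) :
    (heunC e1 e2 e3 a0 a1 a2 a3 (N + 1)).IsRoot E ↔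
      ∃ p ≠ 0, p.natDegree ≤ N ∧ heunOperator e1 e2 e3 a0 a1 a2 a3 E p = 0 := by
  have hA := heunA_ne_zero h13 h23 hγ
  have hc := isThreeTerm_eval_heunC a0 a1 a2 h13 h23 hγ E
  have hc0 : (heunC e1 e2 e3 a0 a1 a2 a3 0).eval E = 1 := by rw [heunC, eval_one]
  refine ⟨fun hE => ?_, fun ⟨p, hp, hdeg, hpE⟩ => ?_⟩
  · set P : ℝ[X] := ∑ m ∈ Finset.range (N + 1), C ((heunC e1 e2 e3 a0 a1 a2 a3 m).eval E) * X ^ m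
    have hP : P.coeff = fun m => (heunC e1 e2 e3 a0 a1 a2 a3 m).eval E := funext fun m => by
      simp only [P, finsetSum_coeff, coeff_C_mul_X_pow, Finset.sum_ite_eq, Finset.mem_range]
      exact ite_eq_left_iff.2 fun hm =>
        (hc.eq_zero_of_lt hA (heunD_eq_zero hN) hE (by omega)).symm
    have htaylor : taylor e3 (taylor (-e3) P) = P := by
      rw [taylor_taylor, add_neg_cancel, taylor_zero]
    refine ⟨taylor (-e3) P, fun h => ?_, ?_, ?_⟩
    · have hP0 : P.coeff 0 = 1 := by rw [hP]; exact hc0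
      rw [← htaylor, h, map_zero, coeff_zero] at hP0
      exact zero_ne_one hP0
    · rw [natDegree_taylor]
      exact natDegree_sum_le_of_forall_le _ _ fun m hm =>
        (natDegree_C_mul_X_pow_le _ _).trans (Finset.mem_range_succ_iff.1 hm)
    · rw [heunOperator_eq_zero_iff, htaylor, hP]
      exact hc
  · have hcoeff := hc.eq_mul hA (heunOperator_eq_zero_iff.1 hpE) hc0
    have hzero : (taylor e3 p).coeff (N + 1) = 0 :=
      coeff_eq_zero_of_natDegree_lt (by rw [natDegree_taylor]; omega)
    refine (mul_eq_zero.1 ((hcoeff (N + 1)).symm.trans hzero)).resolve_left fun h0 => hp ?_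
    refine (taylor_eq_zero e3 p).1 (Polynomial.ext fun m => ?_)
    rw [hcoeff, h0, zero_mul, coeff_zero]

theorem exists_ne_zero_mul_succ_eq {K : Type*} [Field K] {f g : ℕ → K} (hf : ∀ m, f m ≠ 0)
    (hg : ∀ m, g m ≠ 0) :
    ∃ ρ : ℕ → K, ρ 0 = 1 ∧ (∀ m, ρ m ≠ 0) ∧ ∀ m, f m * ρ (m + 1) = ρ m * g m := by
  refine ⟨fun m => ∏ j ∈ Finset.range m, g j / f j, Finset.prod_range_zero _, fun m => ?_,
    fun m => ?_⟩
  · exact Finset.prod_ne_zero_iff.2 fun j _ => div_ne_zero (hg j) (hf j)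
  · simp only [Finset.prod_range_succ]
    rw [mul_left_comm, mul_div_cancel₀ _ (hf m)]

/-- Reflecting the exponents at `e3` exchanges `β` and `γ3` and fixes `α`, which rescales the
coefficients `heunC`. -/
theorem isRoot_heunC_flip3 (h13 : e1 ≠ e3) (h23 : e2 ≠ e3)
    (hγ : ∀ m : ℕ, (m : ℝ) + (2 * a3 + 1 / 2) ≠ 0)
    (hβ : ∀ m : ℕ, (m : ℝ) + (-a0 + 1 / 2 + a1 + a2 + a3) ≠ 0)
    {s : ℝ} (hs : a0 + a1 + a2 + a3 = 2 * s) (m : ℕ) :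
    (heunC e1 e2 e3 (s - a3) (s - a2) (s - a1) (s - a0) m).IsRoot E ↔
      (heunC e1 e2 e3 a0 a1 a2 a3 m).IsRoot E := by
  set γ : ℝ := 2 * a3 + 1 / 2 with hγ_def
  set β : ℝ := 2 * (s - a0) + 1 / 2 with hβ_def
  have hB : heunB e1 e2 e3 (s - a3) (s - a2) (s - a1) (s - a0) = heunB e1 e2 e3 a0 a1 a2 a3 := by
    obtain rfl : a0 = 2 * s - a1 - a2 - a3 := by linear_combination hs
    funext m; simp only [heunB]; ring
  have hD : ∀ m, heunD a0 a1 a2 a3 m = ((m : ℝ) + 2 * s) * ((m : ℝ) + β) := fun m => by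
    obtain rfl : a0 = 2 * s - a1 - a2 - a3 := by linear_combination hs
    rw [heunD, hβ_def]; ring
  have hD' : ∀ m, heunD (s - a3) (s - a2) (s - a1) (s - a0) m =
      ((m : ℝ) + 2 * s) * ((m : ℝ) + γ) := fun m => by
    obtain rfl : a0 = 2 * s - a1 - a2 - a3 := by linear_combination hs
    rw [heunD, hγ_def]; ring
  have hβ' : ∀ m : ℕ, (m : ℝ) + β ≠ 0 := fun m => by
    convert hβ m using 2; linear_combination -hs
  obtain ⟨ρ, hρ0, hρ, hρ_succ⟩ := exists_ne_zero_mul_succ_eq hβ' hγ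
  have hflip := isThreeTerm_eval_heunC (s - a3) (s - a2) (s - a1) h13 h23 hβ' E
  rw [hB] at hflip
  have hrescale := (isThreeTerm_eval_heunC a0 a1 a2 h13 h23 hγ E).rescale (ρ := ρ)
    (a' := heunA e1 e2 e3 (s - a0)) (d' := heunD (s - a3) (s - a2) (s - a1) (s - a0))
    (fun m => by
      simp only [heunA]
      linear_combination (e1 - e3) * (e2 - e3) * ((m : ℝ) + 1) * hρ_succ m)
    (fun m => by
      rw [hD, hD']
      linear_combination (-((m : ℝ) + 2 * s)) * hρ_succ m)
  have heq := hflip.eq_mul (heunA_ne_zero h13 h23 hβ') hrescale eval_one m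
  rw [hρ0, heunC.eq_1, eval_one, one_mul, one_mul] at heq
  rw [IsRoot.def, IsRoot.def, ← heq, mul_eq_zero_iff_left (hρ m)]

/-- Exchanging the roles of `e1` and `e3` in the polynomial solutions turns the reflection of the
exponents at `e3` into the one at `e1`. -/
theorem isRoot_heunC_flip1 (h12 : e1 ≠ e2) (h13 : e1 ≠ e3) (h23 : e2 ≠ e3)
    (hγ3 : ∀ m : ℕ, (m : ℝ) + (2 * a3 + 1 / 2) ≠ 0)
    (hγ1 : ∀ m : ℕ, (m : ℝ) + (2 * a1 + 1 / 2) ≠ 0)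
    (hβ : ∀ m : ℕ, (m : ℝ) + (-a0 + 1 / 2 + a1 + a2 + a3) ≠ 0)
    {s : ℝ} (hs : a0 + a1 + a2 + a3 = 2 * s)
    (hγ : ∀ m : ℕ, (m : ℝ) + (2 * (s - a2) + 1 / 2) ≠ 0) {N : ℕ} (hN : 2 * s = -N) :
    (heunC e1 e2 e3 (s - a1) (s - a0) (s - a3) (s - a2) (N + 1)).IsRoot E ↔
      (heunC e1 e2 e3 a0 a1 a2 a3 (N + 1)).IsRoot E := by
  have hβ0 : ∀ m : ℕ, (m : ℝ) + (2 * (s - a0) + 1 / 2) ≠ 0 := fun m => by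
    convert hβ m using 2; linear_combination -hs
  have hβ1 : ∀ m : ℕ, (m : ℝ) + (-a0 + 1 / 2 + a3 + a2 + a1) ≠ 0 := fun m => by
    convert hβ m using 2; ring
  rw [isRoot_heunC_iff h13 h23 hγ (by linear_combination hN - hs),
    isRoot_heunC_iff h13 h23 hγ3 (hs.trans hN)]
  simp only [← heunOperator_swap13 e1 e2 e3]
  rw [← isRoot_heunC_iff h13.symm h12.symm hβ0 (by linear_combination hN - hs),
    ← isRoot_heunC_iff h13.symm h12.symm hγ1 (by linear_combination hN + hs)]
  exact isRoot_heunC_flip3 h13.symm h12.symm hγ1 hβ1 (by linear_combination hs) (N + 1)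

end HeunEquation

section Wronskian

variable {R : Type*} [CommRing R]

theorem X_sub_C_mul_derivative_X_sub_C_pow_mul (e : R) (r : ℕ) (q : R[X]) :
    (X - C e) * derivative ((X - C e) ^ r * q) =
      (X - C e) ^ r * ((r : R[X]) * q + (X - C e) * derivative q) := by
  cases r with
  | zero => simp
  | succ r =>
    rw [derivative_mul, derivative_X_sub_C_pow, Nat.add_sub_cancel, map_natCast]
    ring

/-- The negative of `δ` is the order at `e` of the rational function `q / p`, because the equation
equates `-δ / (X - e)` to the polar part at `e` of the logarithmic derivative of `q / p`. -/
theorem exists_int_eq_of_wronskian_eq_zero [IsDomain R] {e δ : R} {p q U V : R[X]} (hp : p ≠ 0)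
    (hq : q ≠ 0) (hU : U.eval e ≠ 0)
    (h : (X - C e) * U * (p * derivative q - derivative p * q)
      + (C δ * U + (X - C e) * V) * (p * q) = 0) : ∃ n : ℤ, δ = n := by
  have hfactor : ∀ f : R[X], f ≠ 0 → ∃ (r : ℕ) (g : R[X]), f = (X - C e) ^ r * g ∧ g.eval e ≠ 0 :=
    fun f hf =>
      let ⟨g, hg, hdvd⟩ := exists_eq_pow_rootMultiplicity_mul_and_not_dvd f hf e
      ⟨_, g, hg, fun h0 => hdvd (dvd_iff_isRoot.2 h0)⟩
  obtain ⟨r, f, rfl, hf⟩ := hfactor p hp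
  obtain ⟨s, g, rfl, hg⟩ := hfactor q hq
  have hcancel : U * ((s - r : R[X]) * (f * g) + (X - C e) * (f * derivative g - derivative f * g))
      + (C δ * U + (X - C e) * V) * (f * g) = 0 := by
    refine (mul_eq_zero.1 ?_).resolve_left (pow_ne_zero (r + s) (X_sub_C_ne_zero e))
    rw [← h, pow_add]
    linear_combination
      U * (X - C e) ^ s * g * X_sub_C_mul_derivative_X_sub_C_pow_mul e r f
        - U * (X - C e) ^ r * f * X_sub_C_mul_derivative_X_sub_C_pow_mul e s g
  have heval : U.eval e * (f.eval e * g.eval e) * (δ - (r - s)) = 0 := by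
    have := congrArg (eval e) hcancel
    simp only [eval_add, eval_sub, eval_mul, eval_X, eval_C, eval_natCast, eval_zero] at this
    linear_combination this
  refine ⟨(r : ℤ) - s, ?_⟩
  push_cast
  exact sub_eq_zero.1 ((mul_eq_zero.1 heval).resolve_left (mul_ne_zero hU (mul_ne_zero hf hg)))

/-- `F W(p, q) + (∑ δᵢ F / (X - eᵢ)) p q`, where `F = ∏ (X - eᵢ)` and `W` is the Wronskian. It is
the Wronskian of `p` and `q ∏ (X - eᵢ) ^ δᵢ` multiplied by `F ∏ (X - eᵢ) ^ (-δᵢ)`. -/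
noncomputable def twistedWronskian (e1 e2 e3 δ1 δ2 δ3 : R) (p q : R[X]) : R[X] :=
  (X - C e1) * (X - C e2) * (X - C e3) * (p * derivative q - derivative p * q)
    + cofactorSum e1 e2 e3 δ1 δ2 δ3 * (p * q)

theorem exists_int_eq_of_twistedWronskian_eq_zero [IsDomain R] {e1 e2 e3 δ1 δ2 δ3 : R}
    (h12 : e1 ≠ e2) (h13 : e1 ≠ e3) (h23 : e2 ≠ e3) {p q : R[X]} (hp : p ≠ 0) (hq : q ≠ 0)
    (h : twistedWronskian e1 e2 e3 δ1 δ2 δ3 p q = 0) :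
    (∃ n : ℤ, δ1 = n) ∧ (∃ n : ℤ, δ2 = n) ∧ ∃ n : ℤ, δ3 = n := by
  have heval : ∀ {x y z : R}, x ≠ y → x ≠ z → ((X - C y) * (X - C z)).eval x ≠ 0 := fun hy hz => by
    simpa only [eval_mul, eval_sub, eval_X, eval_C] using
      mul_ne_zero (sub_ne_zero.2 hy) (sub_ne_zero.2 hz)
  rw [twistedWronskian, cofactorSum] at h
  refine ⟨exists_int_eq_of_wronskian_eq_zero hp hq (heval h12 h13)
      (V := C δ2 * (X - C e3) + C δ3 * (X - C e2)) ?_,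
    exists_int_eq_of_wronskian_eq_zero hp hq (heval h12.symm h23)
      (V := C δ1 * (X - C e3) + C δ3 * (X - C e1)) ?_,
    exists_int_eq_of_wronskian_eq_zero hp hq (heval h13.symm h23.symm)
      (V := C δ1 * (X - C e2) + C δ2 * (X - C e1)) ?_⟩ <;>
  linear_combination h

end Wronskian

section CommonEigenvalue

variable {e1 e2 e3 a0 a1 a2 a3 b0 b1 b2 b3 E : ℝ} {p q : ℝ[X]}

theorem cofactorSum_mul_cofactorSum (h0 : b0 * (b0 - 1 / 2) = a0 * (a0 - 1 / 2))
    (h1 : b1 * (b1 - 1 / 2) = a1 * (a1 - 1 / 2)) (h2 : b2 * (b2 - 1 / 2) = a2 * (a2 - 1 / 2))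
    (h3 : b3 * (b3 - 1 / 2) = a3 * (a3 - 1 / 2)) :
    cofactorSum e1 e2 e3 (a1 + b1 - 1 / 2) (a2 + b2 - 1 / 2) (a3 + b3 - 1 / 2)
        * cofactorSum e1 e2 e3 (b1 - a1) (b2 - a2) (b3 - a3) =
      (X - C e1) * (X - C e2) * (X - C e3) *
        (heunPotential e1 e2 e3 b0 b1 b2 b3 E - heunPotential e1 e2 e3 a0 a1 a2 a3 E
          - derivative (cofactorSum e1 e2 e3 (b1 - a1) (b2 - a2) (b3 - a3))) := by
  have hhalf : 2 * C (1 / 2 : ℝ) = 1 := by rw [← map_ofNat C 2, ← C_mul]; norm_num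
  have hC0 := congrArg C h0
  have hC1 := congrArg C h1
  have hC2 := congrArg C h2
  have hC3 := congrArg C h3
  simp only [cofactorSum, heunPotential, derivative_mul, derivative_sub, derivative_add,
    derivative_C, derivative_X]
  simp only [C_add, C_sub, C_mul, C_neg, C_pow] at hC0 hC1 hC2 hC3 ⊢
  set F : ℝ[X] := (X - C e1) * (X - C e2) * (X - C e3)
  linear_combination F * X * hC0
    + (((X - C e2) * (X - C e3)) ^ 2 - F * (X - C e2 - C e3)) * hC1
    + (((X - C e1) * (X - C e3)) ^ 2 - F * (X - C e1 - C e3)) * hC2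
    + (((X - C e1) * (X - C e2)) ^ 2 - F * (X - C e1 - C e2)) * hC3
    - F * ((C b1 - C a1) * (2 * X - C e2 - C e3) + (C b2 - C a2) * (2 * X - C e1 - C e3)
      + (C b3 - C a3) * (2 * X - C e1 - C e2)) * hhalf

theorem derivative_twistedWronskian (hp : heunOperator e1 e2 e3 a0 a1 a2 a3 E p = 0)
    (hq : heunOperator e1 e2 e3 b0 b1 b2 b3 E q = 0) :
    derivative (twistedWronskian e1 e2 e3 (b1 - a1) (b2 - a2) (b3 - a3) p q) =
      -(cofactorSum e1 e2 e3 (a1 + b1 - 1 / 2) (a2 + b2 - 1 / 2) (a3 + b3 - 1 / 2)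
          * (p * derivative q - derivative p * q)
        + (heunPotential e1 e2 e3 b0 b1 b2 b3 E - heunPotential e1 e2 e3 a0 a1 a2 a3 E
            - derivative (cofactorSum e1 e2 e3 (b1 - a1) (b2 - a2) (b3 - a3))) * (p * q)) := by
  have htwo : C (2 : ℝ) = 2 := map_ofNat C 2
  have hhalf : 2 * C (1 / 2 : ℝ) = 1 := by rw [← htwo, ← C_mul]; norm_num
  simp only [heunOperator, heunPotential, twistedWronskian, cofactorSum, derivative_mul,
    derivative_sub, derivative_add, derivative_C, derivative_X] at hp hq ⊢
  simp only [C_add, C_sub, C_mul, C_neg, C_pow, htwo] at hp hq ⊢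
  linear_combination p * hq - q * hp
    - ((X - C e2) * (X - C e3) + (X - C e1) * (X - C e3) + (X - C e1) * (X - C e2))
      * (p * derivative q - derivative p * q) * hhalf

/-- The hypotheses say that `bᵢ` is `aᵢ` or `1 / 2 - aᵢ`, so that both equations are gauge
transforms of one Schrödinger equation, for which the Wronskian is constant. -/
theorem twistedWronskian_one_twistedWronskian (h0 : b0 * (b0 - 1 / 2) = a0 * (a0 - 1 / 2))
    (h1 : b1 * (b1 - 1 / 2) = a1 * (a1 - 1 / 2)) (h2 : b2 * (b2 - 1 / 2) = a2 * (a2 - 1 / 2))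
    (h3 : b3 * (b3 - 1 / 2) = a3 * (a3 - 1 / 2))
    (hp : heunOperator e1 e2 e3 a0 a1 a2 a3 E p = 0)
    (hq : heunOperator e1 e2 e3 b0 b1 b2 b3 E q = 0) :
    twistedWronskian e1 e2 e3 (a1 + b1 - 1 / 2) (a2 + b2 - 1 / 2) (a3 + b3 - 1 / 2) 1
      (twistedWronskian e1 e2 e3 (b1 - a1) (b2 - a2) (b3 - a3) p q) = 0 := by
  rw [twistedWronskian, derivative_twistedWronskian hp hq, twistedWronskian, derivative_one]
  have hcofactor := cofactorSum_mul_cofactorSum (e1 := e1) (e2 := e2) (e3 := e3) (E := E)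
    h0 h1 h2 h3
  linear_combination p * q * hcofactor

/-- The product of `∏ (X - eᵢ) ^ (aᵢ + bᵢ - 1 / 2)` and the twisted Wronskian is constant. If the
constant is nonzero, these exponents are integers; if it is zero, then `q ∏ (X - eᵢ) ^ (bᵢ - aᵢ)` is
a multiple of `p`. -/
theorem exists_int_of_heunOperator_eq_zero (h12 : e1 ≠ e2) (h13 : e1 ≠ e3) (h23 : e2 ≠ e3)
    (h0 : b0 * (b0 - 1 / 2) = a0 * (a0 - 1 / 2))
    (h1 : b1 * (b1 - 1 / 2) = a1 * (a1 - 1 / 2)) (h2 : b2 * (b2 - 1 / 2) = a2 * (a2 - 1 / 2))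
    (h3 : b3 * (b3 - 1 / 2) = a3 * (a3 - 1 / 2)) (hp0 : p ≠ 0) (hq0 : q ≠ 0)
    (hp : heunOperator e1 e2 e3 a0 a1 a2 a3 E p = 0)
    (hq : heunOperator e1 e2 e3 b0 b1 b2 b3 E q = 0) :
    ((∃ n : ℤ, a1 + b1 - 1 / 2 = n) ∧ (∃ n : ℤ, a2 + b2 - 1 / 2 = n) ∧
      ∃ n : ℤ, a3 + b3 - 1 / 2 = n) ∨
    ((∃ n : ℤ, b1 - a1 = n) ∧ (∃ n : ℤ, b2 - a2 = n) ∧ ∃ n : ℤ, b3 - a3 = n) := by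
  by_cases hW : twistedWronskian e1 e2 e3 (b1 - a1) (b2 - a2) (b3 - a3) p q = 0
  · exact .inr (exists_int_eq_of_twistedWronskian_eq_zero h12 h13 h23 hp0 hq0 hW)
  · exact .inl (exists_int_eq_of_twistedWronskian_eq_zero h12 h13 h23 one_ne_zero hW
      (twistedWronskian_one_twistedWronskian h0 h1 h2 h3 hp hq))

end CommonEigenvalue

section IntegerExponents

variable {e1 e2 e3 : ℝ}

theorem ne_and_ne_and_ne_of_sub_mul_sub_neg (he : (e1 - e3) * (e2 - e3) < 0) :
    e1 ≠ e2 ∧ e1 ≠ e3 ∧ e2 ≠ e3 :=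
  ⟨fun h => (mul_self_nonneg (e2 - e3)).not_gt (h ▸ he),
    sub_ne_zero.1 (left_ne_zero_of_mul he.ne), sub_ne_zero.1 (right_ne_zero_of_mul he.ne)⟩

theorem intCast_add_half_ne_zero (n : ℤ) : (n : ℝ) + 1 / 2 ≠ 0 := fun h => by
  have h2 : 2 * n + 1 = 0 := by exact_mod_cast (by linear_combination 2 * h : 2 * (n : ℝ) + 1 = 0)
  omega

theorem natCast_add_two_mul_half_add_half_ne_zero (k : ℤ) (m : ℕ) :
    (m : ℝ) + (2 * ((k : ℝ) / 2) + 1 / 2) ≠ 0 := by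
  convert intCast_add_half_ne_zero (m + k) using 1
  push_cast
  ring

theorem heunA_mul_heunD_pos (he : (e1 - e3) * (e2 - e3) < 0) {k0 k1 k2 k3 : ℤ} {N : ℕ}
    (hN : k0 + k1 + k2 + k3 = -2 * N)
    (hk : (0 ≤ k3 ∧ N + k0 ≤ 0) ∨ (0 ≤ k0 ∧ N + k3 ≤ 0)) {m : ℕ} (hm : m < N) :
    0 < heunA e1 e2 e3 (k3 / 2) m * heunD (k0 / 2) (k1 / 2) (k2 / 2) (k3 / 2) m := by
  have hNR : (k0 + k1 + k2 + k3 : ℝ) = -2 * N := by exact_mod_cast hN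
  have hmN : (m : ℝ) + 1 ≤ N := by exact_mod_cast hm
  have : (0 : ℝ) ≤ m := m.cast_nonneg
  have hprod : heunA e1 e2 e3 (k3 / 2) m * heunD (k0 / 2) (k1 / 2) (k2 / 2) (k3 / 2) m =
      (e1 - e3) * (e2 - e3) * (m - N) *
        ((m + 1) * ((m + k3 + 1 / 2) * (m - N - k0 + 1 / 2))) := by
    have hk0 : (k0 : ℝ) = -2 * N - k1 - k2 - k3 := by linear_combination hNR
    rw [heunA, heunD, hk0]
    ring
  rw [hprod]
  refine mul_pos (mul_pos_of_neg_of_neg he (by linarith)) (mul_pos (by linarith) ?_)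
  rcases hk with ⟨h3, h0⟩ | ⟨h0, h3⟩
  · have h3R : (0 : ℝ) ≤ k3 := by exact_mod_cast h3
    have h0R : (N + k0 : ℝ) ≤ 0 := by exact_mod_cast h0
    exact mul_pos (by linarith) (by linarith)
  · have h0R : (0 : ℝ) ≤ k0 := by exact_mod_cast h0
    have h3R : (N + k3 : ℝ) ≤ 0 := by exact_mod_cast h3
    exact mul_pos_of_neg_of_neg (by linarith) (by linarith)

theorem splitsSeparably_heunC_of_pos (he : (e1 - e3) * (e2 - e3) < 0) {k0 k1 k2 k3 : ℤ} {N : ℕ}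
    (hN : k0 + k1 + k2 + k3 = -2 * N)
    (hk : (0 ≤ k3 ∧ N + k0 ≤ 0) ∨ (0 ≤ k0 ∧ N + k3 ≤ 0)) :
    SplitsSeparably (heunC e1 e2 e3 (k0 / 2) (k1 / 2) (k2 / 2) (k3 / 2) (N + 1)) :=
  have ⟨_, h13, h23⟩ := ne_and_ne_and_ne_of_sub_mul_sub_neg he
  (isThreeTerm_heunC _ _ _ h13 h23 (natCast_add_two_mul_half_add_half_ne_zero k3)).splitsSeparably
    (by norm_num) (by rw [heunC]) fun _ hm => heunA_mul_heunD_pos he hN hk hm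

/-- In the last two cases of `hk` the Jacobi matrix becomes symmetrizable after a reflection of the
exponents at `e1`. -/
theorem splitsSeparably_heunC (he : (e1 - e3) * (e2 - e3) < 0) {k0 k1 k2 k3 : ℤ} {N : ℕ}
    (hN : k0 + k1 + k2 + k3 = -2 * N)
    (hk : (0 ≤ k3 ∧ N + k0 ≤ 0) ∨ (0 ≤ k0 ∧ N + k3 ≤ 0) ∨
      (0 ≤ k1 ∧ N + k2 ≤ 0) ∨ (0 ≤ k2 ∧ N + k1 ≤ 0)) :
    SplitsSeparably (heunC e1 e2 e3 (k0 / 2) (k1 / 2) (k2 / 2) (k3 / 2) (N + 1)) := by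
  rw [← or_assoc] at hk
  obtain hk | hk := hk
  · exact splitsSeparably_heunC_of_pos he hN hk
  obtain ⟨h12, h13, h23⟩ := ne_and_ne_and_ne_of_sub_mul_sub_neg he
  have hγ := natCast_add_two_mul_half_add_half_ne_zero
  have hNR : (k0 + k1 + k2 + k3 : ℝ) = -2 * N := by exact_mod_cast hN
  have hcast : ∀ k : ℤ, -(N : ℝ) / 2 - k / 2 = ((-N - k : ℤ) : ℝ) / 2 := fun k => by
    push_cast; ring
  have hflip := fun E : ℝ => isRoot_heunC_flip1 (E := E) (s := -(N : ℝ) / 2) (N := N)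
    h12 h13 h23 (hγ k3) (hγ k1)
    (fun m => by
      convert intCast_add_half_ne_zero (m - N - k0) using 1
      push_cast
      linear_combination hNR / 2)
    (a0 := k0 / 2) (a2 := k2 / 2) (by linear_combination hNR / 2)
    (fun m => by rw [hcast]; exact hγ _ m) (by ring)
  simp only [hcast] at hflip
  refine (splitsSeparably_heunC_of_pos he (k0 := -N - k1) (k1 := -N - k0) (k2 := -N - k3)
    (k3 := -N - k2) (N := N) (by omega) (by omega)).of_isRoot_imp ?_ ?_ fun E => (hflip E).1
  · exact ne_zero_of_natDegree_gt (n := N) (by rw [natDegree_heunC _ _ _ h13 h23 (hγ k3)]; omega)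
  · rw [natDegree_heunC _ _ _ h13 h23 (hγ k3), natDegree_heunC _ _ _ h13 h23 (hγ _)]

theorem dvd_of_isRoot_heunC_of_isRoot_heunC (h12 : e1 ≠ e2) (h13 : e1 ≠ e3) (h23 : e2 ≠ e3)
    {k0 k1 k2 k3 n0 n1 n2 n3 : ℤ} {M N : ℕ} (hk : k0 + k1 + k2 + k3 = -2 * M)
    (hn : n0 + n1 + n2 + n3 = -2 * N) (h0 : n0 * (n0 - 1) = k0 * (k0 - 1))
    (h1 : n1 * (n1 - 1) = k1 * (k1 - 1)) (h2 : n2 * (n2 - 1) = k2 * (k2 - 1))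
    (h3 : n3 * (n3 - 1) = k3 * (k3 - 1)) {E : ℝ}
    (hkE : (heunC e1 e2 e3 (k0 / 2) (k1 / 2) (k2 / 2) (k3 / 2) (M + 1)).IsRoot E)
    (hnE : (heunC e1 e2 e3 (n0 / 2) (n1 / 2) (n2 / 2) (n3 / 2) (N + 1)).IsRoot E) :
    2 ∣ (k1 + k2) - (n1 + n2) ∧ 2 ∣ (k1 + k3) - (n1 + n3) := by
  have hγ := natCast_add_two_mul_half_add_half_ne_zero
  have hkR : (k0 + k1 + k2 + k3 : ℝ) = -2 * M := by exact_mod_cast hk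
  have hnR : (n0 + n1 + n2 + n3 : ℝ) = -2 * N := by exact_mod_cast hn
  have hexp : ∀ {k n : ℤ}, n * (n - 1) = k * (k - 1) →
      (n / 2 : ℝ) * (n / 2 - 1 / 2) = k / 2 * (k / 2 - 1 / 2) := fun {k n} h => by
    have hR : (n * (n - 1) : ℝ) = k * (k - 1) := by exact_mod_cast h
    linear_combination hR / 4
  have hodd : ∀ {k n : ℤ}, (∃ j : ℤ, (k / 2 + n / 2 - 1 / 2 : ℝ) = j) → ¬ 2 ∣ k - n := by
    rintro k n ⟨j, hj⟩
    have : k + n = 2 * j + 1 := by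
      exact_mod_cast (by linear_combination 2 * hj : (k + n : ℝ) = 2 * j + 1)
    omega
  have heven : ∀ {k n : ℤ}, (∃ j : ℤ, (n / 2 - k / 2 : ℝ) = j) → 2 ∣ k - n := by
    rintro k n ⟨j, hj⟩
    have : n - k = 2 * j := by exact_mod_cast (by linear_combination 2 * hj : (n - k : ℝ) = 2 * j)
    omega
  obtain ⟨p, hp0, -, hp⟩ := (isRoot_heunC_iff h13 h23 (hγ k3) (by linear_combination hkR / 2)).1 hkE
  obtain ⟨q, hq0, -, hq⟩ := (isRoot_heunC_iff h13 h23 (hγ n3) (by linear_combination hnR / 2)).1 hnE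
  rcases exists_int_of_heunOperator_eq_zero h12 h13 h23 (hexp h0) (hexp h1) (hexp h2) (hexp h3)
    hp0 hq0 hp hq with ⟨h1, h2, h3⟩ | ⟨h1, h2, h3⟩
  · have := hodd h1; have := hodd h2; have := hodd h3
    omega
  · have := heven h1; have := heven h2; have := heven h3
    omega

end IntegerExponents

section SpectralFactors

theorem isRoot_specP {e1 e2 e3 a0 a1 a2 a3 E : ℝ} {N : ℕ} :
    (specP e1 e2 e3 a0 a1 a2 a3 N).IsRoot E ↔ (heunC e1 e2 e3 a0 a1 a2 a3 (N + 1)).IsRoot E := by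
  rw [specP, IsRoot.def, IsRoot.def, eval_C_mul, mul_eq_zero, or_iff_right_iff_imp, inv_eq_zero,
    leadingCoeff_eq_zero]
  intro h
  rw [h, eval_zero]

theorem SplitsSeparably.specP {e1 e2 e3 a0 a1 a2 a3 : ℝ} {N : ℕ}
    (h : SplitsSeparably (heunC e1 e2 e3 a0 a1 a2 a3 (N + 1))) :
    SplitsSeparably (specP e1 e2 e3 a0 a1 a2 a3 N) :=
  h.C_mul (inv_ne_zero (leadingCoeff_ne_zero.2 h.separable.ne_zero))

/-- `p` is `1` or some `P_{k0/2,k1/2,k2/2,k3/2}` with `kᵢ = -lᵢ` or `kᵢ = lᵢ + 1`. The residues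
of `r` and `s` modulo `2` encode the signs by which an eigenfunction `f(℘) ∏ (℘ - eᵢ) ^ (kᵢ / 2)`,
where `f` is a polynomial, is multiplied along the periods of `℘`, relative to `kᵢ = -lᵢ`. -/
def IsSpectralFactor (e1 e2 e3 : ℝ) (l0 l1 l2 l3 : ℕ) (r s : ℤ) (p : ℝ[X]) : Prop :=
  p = 1 ∨ ∃ (k0 k1 k2 k3 : ℤ) (N : ℕ),
    ((k0 = -l0 ∨ k0 = l0 + 1) ∧ (k1 = -l1 ∨ k1 = l1 + 1) ∧
      (k2 = -l2 ∨ k2 = l2 + 1) ∧ (k3 = -l3 ∨ k3 = l3 + 1)) ∧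
    2 ∣ k1 + k2 - (l1 + l2 + r) ∧ 2 ∣ k1 + k3 - (l1 + l3 + s) ∧
    k0 + k1 + k2 + k3 = -2 * N ∧ p = specP e1 e2 e3 (k0 / 2) (k1 / 2) (k2 / 2) (k3 / 2) N

variable (e1 e2 e3 : ℝ) (l0 l1 l2 l3 : ℕ)

theorem isSpectralFactor_specP0 :
    IsSpectralFactor e1 e2 e3 l0 l1 l2 l3 0 0 (specP0 e1 e2 e3 l0 l1 l2 l3) := by
  unfold specP0
  split_ifs
  · refine .inr ⟨-l0, -l1, -l2, -l3, _, ?_, ?_, ?_, ?_, by push_cast; rfl⟩ <;> omega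
  · refine .inr ⟨-l0, l1 + 1, l2 + 1, l3 + 1, _, ?_, ?_, ?_, ?_, by push_cast; rfl⟩ <;> omega
  · exact .inl rfl
  · refine .inr ⟨l0 + 1, -l1, -l2, -l3, _, ?_, ?_, ?_, ?_, by push_cast; rfl⟩ <;> omega

theorem isSpectralFactor_specP1 :
    IsSpectralFactor e1 e2 e3 l0 l1 l2 l3 1 1 (specP1 e1 e2 e3 l0 l1 l2 l3) := by
  unfold specP1
  split_ifs
  · refine .inr ⟨-l0, -l1, l2 + 1, l3 + 1, _, ?_, ?_, ?_, ?_, by push_cast; rfl⟩ <;> omega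
  · exact .inl rfl
  · refine .inr ⟨l0 + 1, l1 + 1, -l2, -l3, _, ?_, ?_, ?_, ?_, by push_cast; rfl⟩ <;> omega
  · refine .inr ⟨l0 + 1, -l1, l2 + 1, l3 + 1, _, ?_, ?_, ?_, ?_, by push_cast; rfl⟩ <;> omega
  · exact .inl rfl
  · refine .inr ⟨-l0, l1 + 1, -l2, -l3, _, ?_, ?_, ?_, ?_, by push_cast; rfl⟩ <;> omega

theorem isSpectralFactor_specP2 :
    IsSpectralFactor e1 e2 e3 l0 l1 l2 l3 1 0 (specP2 e1 e2 e3 l0 l1 l2 l3) := by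
  unfold specP2
  split_ifs
  · refine .inr ⟨-l0, l1 + 1, -l2, l3 + 1, _, ?_, ?_, ?_, ?_, by push_cast; rfl⟩ <;> omega
  · exact .inl rfl
  · refine .inr ⟨l0 + 1, -l1, l2 + 1, -l3, _, ?_, ?_, ?_, ?_, by push_cast; rfl⟩ <;> omega
  · refine .inr ⟨l0 + 1, l1 + 1, -l2, l3 + 1, _, ?_, ?_, ?_, ?_, by push_cast; rfl⟩ <;> omega
  · exact .inl rfl
  · refine .inr ⟨-l0, -l1, l2 + 1, -l3, _, ?_, ?_, ?_, ?_, by push_cast; rfl⟩ <;> omega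

theorem isSpectralFactor_specP3 :
    IsSpectralFactor e1 e2 e3 l0 l1 l2 l3 0 1 (specP3 e1 e2 e3 l0 l1 l2 l3) := by
  unfold specP3
  split_ifs
  · refine .inr ⟨-l0, l1 + 1, l2 + 1, -l3, _, ?_, ?_, ?_, ?_, by push_cast; rfl⟩ <;> omega
  · exact .inl rfl
  · refine .inr ⟨l0 + 1, -l1, -l2, l3 + 1, _, ?_, ?_, ?_, ?_, by push_cast; rfl⟩ <;> omega
  · refine .inr ⟨l0 + 1, l1 + 1, l2 + 1, -l3, _, ?_, ?_, ?_, ?_, by push_cast; rfl⟩ <;> omega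
  · exact .inl rfl
  · refine .inr ⟨-l0, -l1, -l2, l3 + 1, _, ?_, ?_, ?_, ?_, by push_cast; rfl⟩ <;> omega

namespace IsSpectralFactor

variable {e1 e2 e3 l0 l1 l2 l3} {r s r' s' : ℤ} {p q : ℝ[X]}

theorem splitsSeparably
    (hl : (l3 = 0 ∧ l1 + l2 ≤ l0 + 1) ∨
      (l0 + l3 + 1 = l1 + l2 ∧ l0 + l1 + 1 ≤ l2 + l3 ∧ l0 + l2 + 1 ≤ l1 + l3) ∨
      (l0 + l3 = l1 + l2 + 1 ∧ l2 + l3 + 1 ≤ l0 + l1 ∧ l1 + l3 + 1 ≤ l0 + l2))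
    (he : (e1 - e3) * (e2 - e3) < 0) (hp : IsSpectralFactor e1 e2 e3 l0 l1 l2 l3 r s p) :
    SplitsSeparably p := by
  obtain rfl | ⟨k0, k1, k2, k3, N, hk, -, -, hN, rfl⟩ := hp
  · exact .one
  · exact .specP (splitsSeparably_heunC he hN (by omega))

theorem isCoprime (he : (e1 - e3) * (e2 - e3) < 0)
    (hp : IsSpectralFactor e1 e2 e3 l0 l1 l2 l3 r s p)
    (hq : IsSpectralFactor e1 e2 e3 l0 l1 l2 l3 r' s' q) (hsplits : SplitsSeparably p)
    (hrs : ¬ (2 ∣ r - r' ∧ 2 ∣ s - s')) : IsCoprime p q := by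
  have hexp : ∀ {l k n : ℤ}, k = -l ∨ k = l + 1 → n = -l ∨ n = l + 1 →
      n * (n - 1) = k * (k - 1) := by
    rintro l k n (rfl | rfl) (rfl | rfl) <;> ring
  obtain rfl | ⟨k0, k1, k2, k3, M, ⟨hk0, hk1, hk2, hk3⟩, hkr, hks, hM, rfl⟩ := hp
  · exact isCoprime_one_left
  obtain rfl | ⟨n0, n1, n2, n3, N, ⟨hn0, hn1, hn2, hn3⟩, hnr, hns, hN, rfl⟩ := hq
  · exact isCoprime_one_right
  obtain ⟨h12, h13, h23⟩ := ne_and_ne_and_ne_of_sub_mul_sub_neg he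
  refine hsplits.isCoprime fun E hkE hnE => hrs ?_
  have hdvd := dvd_of_isRoot_heunC_of_isRoot_heunC h12 h13 h23 hM hN (hexp hk0 hn0)
    (hexp hk1 hn1) (hexp hk2 hn2) (hexp hk3 hn3) (isRoot_specP.1 hkE) (isRoot_specP.1 hnE)
  omega

end IsSpectralFactor

end SpectralFactors

theorem specQ_real_distinct_roots_general (l0 l1 l2 l3 : ℕ)
    (hcond : (l3 = 0 ∧ l1 + l2 ≤ l0 + 1) ∨
      (l0 + l3 + 1 = l1 + l2 ∧ l0 + l1 + 1 ≤ l2 + l3 ∧ l0 + l2 + 1 ≤ l1 + l3) ∨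
      (l0 + l3 = l1 + l2 + 1 ∧ l2 + l3 + 1 ≤ l0 + l1 ∧ l1 + l3 + 1 ≤ l0 + l2))
    (e1 e2 e3 : ℝ) (he : (e1 - e3) * (e2 - e3) < 0) :
    SplitsSeparably (specQ e1 e2 e3 l0 l1 l2 l3) := by
  have h0 := isSpectralFactor_specP0 e1 e2 e3 l0 l1 l2 l3
  have h1 := isSpectralFactor_specP1 e1 e2 e3 l0 l1 l2 l3
  have h2 := isSpectralFactor_specP2 e1 e2 e3 l0 l1 l2 l3
  have h3 := isSpectralFactor_specP3 e1 e2 e3 l0 l1 l2 l3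
  have hs0 := h0.splitsSeparably hcond he
  have hs1 := h1.splitsSeparably hcond he
  have hs2 := h2.splitsSeparably hcond he
  have hs3 := h3.splitsSeparably hcond he
  have h01 := h0.isCoprime he h1 hs0 (by decide)
  have h02 := h0.isCoprime he h2 hs0 (by decide)
  have h03 := h0.isCoprime he h3 hs0 (by decide)
  have h12 := h1.isCoprime he h2 hs1 (by decide)
  have h13 := h1.isCoprime he h3 hs1 (by decide)
  have h23 := h2.isCoprime he h3 hs2 (by decide)
  exact ((hs0.mul hs1 h01).mul hs2 (h02.mul_left h12)).mul hs3 ((h03.mul_left h13).mul_left h23)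

/-- **Theorem 1.1.** Let `l0,l1,l2,l3 ∈ ℤ_{≥0}` and `e1 > e3 > e2` with
`e1+e2+e3 = 0` (purely imaginary modulus). If (i) `l3 = 0` and `l0 ≥ l1+l2−1`, or
(ii) `l0+l3+1 = l1+l2`, `l2+l3 ≥ l0+l1+1`, `l1+l3 ≥ l0+l2+1`, or
(iii) `l0+l3 = l1+l2+1`, `l0+l1 ≥ l2+l3+1`, `l0+l2 ≥ l1+l3+1`, then all roots of the
spectral polynomial `Q^{(l0,l1,l2,l3)}` are real and distinct. -/
theorem specQ_real_distinct_roots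
    (l0 l1 l2 l3 : ℕ)
    (hcond : (l3 = 0 ∧ l1 + l2 ≤ l0 + 1) ∨
      (l0 + l3 + 1 = l1 + l2 ∧ l0 + l1 + 1 ≤ l2 + l3 ∧ l0 + l2 + 1 ≤ l1 + l3) ∨
      (l0 + l3 = l1 + l2 + 1 ∧ l2 + l3 + 1 ≤ l0 + l1 ∧ l1 + l3 + 1 ≤ l0 + l2))
    (e1 e2 e3 : ℝ) (h13 : e3 < e1) (h32 : e2 < e3) (hsum : e1 + e2 + e3 = 0) :
    (specQ e1 e2 e3 l0 l1 l2 l3).map (algebraMap ℝ ℂ) ≠ 0 ∧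
    ((specQ e1 e2 e3 l0 l1 l2 l3).map (algebraMap ℝ ℂ)).roots.Nodup ∧
    ∀ z ∈ ((specQ e1 e2 e3 l0 l1 l2 l3).map (algebraMap ℝ ℂ)).roots, z.im = 0 :=
  (specQ_real_distinct_roots_general l0 l1 l2 l3 hcond e1 e2 e3
    (mul_neg_of_pos_of_neg (sub_pos.2 h13) (sub_neg.2 h32))).map_algebraMap_complex
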